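/- arXiv:1706.06331 — 2 statements merged into one kernel-verified Lean document; each statement's English description precedes it below -/
import Mathlib

section
/- Let ε ∈ (0,1] and let a : ℤ^d × (εℤ)^d → ℝ, (η,x) ↦ a_η(x). Assume there exist c > 0 and C > 0 such that Σ_{η∈ℤ^d} e^{2c|η|} a_η(x)² ≤ C² for every x ∈ (εℤ)^d. Then (Tu)(x) := Σ_{η∈ℤ^d} a_η(x) u(x+εη) defines a bounded linear operator T on ℓ²((εℤ)^d), with operator norm bounded by a constant depending only on C, c and d (in particular uniform in ε). If in addition a_η(x) = a_{−η}(x+εη) for all η ∈ ℤ^d and x ∈ (εℤ)^d, then T is symmetric: ⟨u, Tv⟩ = ⟨Tu, v⟩ for all u, v ∈ ℓ²((εℤ)^d). -/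
/-!
Bounding each term of `∑ e^{2c|η|} a_η(x)² ≤ C²` by the whole sum gives `|a_η(x)| ≤ C e^{-c|η|}`
uniformly in `x`. Hence `T` is an operator-norm convergent sum of bounded multiplications composed
with isometric translations, and `‖T‖ ≤ C ∑ e^{-c|η|}`. Under the symmetry condition the adjoint
of the `η`-th summand is the `(-η)`-th one, so the substitution `η ↦ -η` shows that `T` is
symmetric.
-/

open scoped RealInnerProductSpace Classical
noncomputable section

/-- `ℝ^d` as a Euclidean space. -/
abbrev Ed (d : ℕ) := EuclideanSpace ℝ (Fin d)

/-- The lattice vector `η ∈ ℤ^d` regarded as a vector of `ℝ^d`. -/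
def zv {d : ℕ} (η : Fin d → ℤ) : Ed d :=
  (EuclideanSpace.equiv (Fin d) ℝ).symm (fun i => (η i : ℝ))

/-- The lattice point `εm ∈ (εℤ)^d` of integer coordinates `m`. -/
def pt (d : ℕ) (ε : ℝ) (m : Fin d → ℤ) : Fin d → ℝ := fun i => ε * (m i : ℝ)

open scoped ENNReal

section LpComp

variable {α β 𝕜 E : Type*} {p : ℝ≥0∞} [NormedAddCommGroup E]

theorem memℓp_comp_equiv (e : α ≃ β) {f : β → E} (hf : Memℓp f p) : Memℓp (f ∘ e) p := by
  obtain rfl | rfl | hp := p.trichotomy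
  · exact memℓp_zero (hf.finite_dsupport.preimage e.injective.injOn)
  · exact memℓp_infty (hf.bddAbove.mono (Set.range_comp_subset_range e (fun j => ‖f j‖)))
  · exact memℓp_gen (e.summable_iff.mpr (hf.summable hp))

theorem norm_lp_eq_of_coe_eq_comp_equiv [Fact (1 ≤ p)] (e : α ≃ β)
    {f : lp (fun _ : α => E) p} {g : lp (fun _ : β => E) p} (h : ∀ i, f i = g (e i)) :
    ‖f‖ = ‖g‖ := by
  obtain rfl | rfl | hp := p.trichotomy
  · exact absurd (Fact.out : (1 : ℝ≥0∞) ≤ 0) (by simp)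
  · simp only [lp.norm_eq_ciSup, h]
    exact e.iSup_comp (g := fun j => ‖g j‖)
  · simp only [lp.norm_eq_tsum_rpow hp, h]
    rw [e.tsum_eq fun j => ‖g j‖ ^ p.toReal]

variable [NormedField 𝕜] [NormedSpace 𝕜 E] [Fact (1 ≤ p)]

variable (𝕜 E p) in
/-- The isometry `f ↦ f ∘ e` between `ℓᵖ` spaces induced by a bijection `e` of the index sets;
for `e = (· + η)` it is the translation `τ_η`. -/
def lpCompEquiv (e : α ≃ β) : lp (fun _ : β => E) p →ₗᵢ[𝕜] lp (fun _ : α => E) p where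
  toFun f := ⟨f ∘ e, memℓp_comp_equiv e (lp.memℓp f)⟩
  map_add' _ _ := rfl
  map_smul' _ _ := rfl
  norm_map' _ := norm_lp_eq_of_coe_eq_comp_equiv e fun _ => rfl

end LpComp

section TranslationOperator

variable {G 𝕜 E : Type*} {p : ℝ≥0∞} [AddGroup G]

section Lp

variable [NontriviallyNormedField 𝕜] [NormedAddCommGroup E] [NormedSpace 𝕜 E] [Fact (1 ≤ p)]

variable (E p) in
/-- The summand `a_η τ_η` of a translation operator, `u ↦ (m ↦ b m • u (m + η))`. The bound on the
coefficient `b` is an argument because it makes the operator bounded. -/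
def weightedTranslation (b : G → 𝕜) {K : ℝ} (hb : ∀ m, ‖b m‖ ≤ K) (η : G) :
    lp (fun _ : G => E) p →L[𝕜] lp (fun _ : G => E) p :=
  lp.mapCLM p (fun m => ContinuousLinearMap.lsmul 𝕜 𝕜 (b m)) ((norm_nonneg _).trans (hb 0))
      (fun m => (ContinuousLinearMap.opNorm_lsmul_apply_le (b m)).trans (hb m)) ∘L
    (lpCompEquiv 𝕜 E p (Equiv.addRight η)).toContinuousLinearMap

theorem weightedTranslation_apply (b : G → 𝕜) {K : ℝ} (hb : ∀ m, ‖b m‖ ≤ K) (η : G)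
    (u : lp (fun _ : G => E) p) (m : G) :
    weightedTranslation E p b hb η u m = b m • u (m + η) :=
  rfl

theorem norm_weightedTranslation_le (b : G → 𝕜) {K : ℝ} (hb : ∀ m, ‖b m‖ ≤ K) (η : G) :
    ‖weightedTranslation E p b hb η‖ ≤ K := by
  have hK : 0 ≤ K := (norm_nonneg _).trans (hb 0)
  calc ‖weightedTranslation E p b hb η‖ ≤ K * 1 :=
        (ContinuousLinearMap.opNorm_comp_le _ _).trans <|
          mul_le_mul (lp.norm_mapCLM_le p _ hK _) (LinearIsometry.norm_toContinuousLinearMap_le _)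
            (norm_nonneg _) hK
    _ = K := mul_one K

variable (E p) in
/-- The translation operator `T = ∑_η a_η τ_η` on `ℓᵖ(G; E)`, as a series of operators; it
converges in norm when the bounds `B η` on the coefficients are summable, and is the junk value of
`tsum` when it diverges. -/
def translationOperator (a : G → G → 𝕜) {B : G → ℝ} (ha : ∀ η m, ‖a η m‖ ≤ B η) :
    lp (fun _ : G => E) p →L[𝕜] lp (fun _ : G => E) p :=
  ∑' η, weightedTranslation E p (a η) (ha η) η

variable {a : G → G → 𝕜} {B : G → ℝ}

theorem norm_translationOperator_le (hB : Summable B) (ha : ∀ η m, ‖a η m‖ ≤ B η) :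
    ‖translationOperator E p a ha‖ ≤ ∑' η, B η :=
  tsum_of_norm_bounded hB.hasSum fun η => norm_weightedTranslation_le (a η) (ha η) η

variable [CompleteSpace E]

theorem hasSum_weightedTranslation (hB : Summable B) (ha : ∀ η m, ‖a η m‖ ≤ B η)
    (u : lp (fun _ : G => E) p) :
    HasSum (fun η => weightedTranslation E p (a η) (ha η) η u) (translationOperator E p a ha u) :=
  have hsum : Summable fun η => weightedTranslation E p (a η) (ha η) η :=
    .of_norm_bounded hB fun η => norm_weightedTranslation_le (a η) (ha η) η
  hsum.hasSum.mapL (ContinuousLinearMap.apply 𝕜 _ u)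

theorem hasSum_translationOperator_apply (hB : Summable B) (ha : ∀ η m, ‖a η m‖ ≤ B η)
    (u : lp (fun _ : G => E) p) (m : G) :
    HasSum (fun η => a η m • u (m + η)) (translationOperator E p a ha u m) :=
  (hasSum_weightedTranslation hB ha u).mapL (lp.evalCLM 𝕜 (fun _ : G => E) p m)

end Lp

section Inner

variable [RCLike 𝕜] [NormedAddCommGroup E] [InnerProductSpace 𝕜 E]

theorem inner_weightedTranslation_left {b b' : G → 𝕜} {K K' : ℝ} (hb : ∀ m, ‖b m‖ ≤ K)
    (hb' : ∀ m, ‖b' m‖ ≤ K') {η : G} (h : ∀ m, b m = starRingEnd 𝕜 (b' (m + η)))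
    (u v : lp (fun _ : G => E) 2) :
    inner 𝕜 (weightedTranslation E 2 b' hb' (-η) u) v =
      inner 𝕜 u (weightedTranslation E 2 b hb η v) := by
  rw [lp.inner_eq_tsum, lp.inner_eq_tsum, ← (Equiv.addRight η).tsum_eq]
  refine tsum_congr fun m => ?_
  simp only [Equiv.coe_addRight, weightedTranslation_apply, add_neg_cancel_right, h m,
    inner_smul_left, inner_smul_right]

theorem isSymmetric_translationOperator [CompleteSpace E] {a : G → G → 𝕜} {B : G → ℝ}
    (hB : Summable B) (ha : ∀ η m, ‖a η m‖ ≤ B η)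
    (hsymm : ∀ η m, a η m = starRingEnd 𝕜 (a (-η) (m + η))) :
    (translationOperator E 2 a ha).IsSymmetric := by
  intro u v
  have hleft : HasSum (fun η => inner 𝕜 (weightedTranslation E 2 (a η) (ha η) η u) v)
      (inner 𝕜 (translationOperator E 2 a ha u) v) :=
    (hasSum_weightedTranslation hB ha u).mapL (innerSLFlip 𝕜 v)
  have hright : HasSum (fun η => inner 𝕜 u (weightedTranslation E 2 (a η) (ha η) η v))
      (inner 𝕜 u (translationOperator E 2 a ha v)) :=
    (hasSum_weightedTranslation hB ha v).mapL (innerSL 𝕜 u)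
  refine HasSum.unique ?_ hright
  simpa only [Function.comp_def, Equiv.neg_apply,
    inner_weightedTranslation_left (ha _) (ha _) (hsymm _), ContinuousLinearMap.coe_coe] using
    (Equiv.neg G).hasSum_iff.mpr hleft

end Inner

end TranslationOperator

section ExponentialWeights

theorem norm_le_mul_exp_neg_of_tsum_exp_mul_sq_le {ι E : Type*} [SeminormedAddCommGroup E]
    {w : ι → ℝ} {f : ι → E} {C : ℝ} (hC : 0 ≤ C)
    (hsum : Summable fun i => Real.exp (2 * w i) * ‖f i‖ ^ 2)
    (hle : ∑' i, Real.exp (2 * w i) * ‖f i‖ ^ 2 ≤ C ^ 2) (i : ι) :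
    ‖f i‖ ≤ C * Real.exp (-w i) := by
  have hsq : (Real.exp (w i) * ‖f i‖) ^ 2 ≤ C ^ 2 :=
    calc (Real.exp (w i) * ‖f i‖) ^ 2 = Real.exp (2 * w i) * ‖f i‖ ^ 2 := by
          rw [mul_pow, ← Real.exp_nat_mul, Nat.cast_ofNat]
      _ ≤ ∑' j, Real.exp (2 * w j) * ‖f j‖ ^ 2 := hsum.le_tsum i fun j _ => by positivity
      _ ≤ C ^ 2 := hle
  rw [Real.exp_neg, ← div_eq_mul_inv, le_div_iff₀' (Real.exp_pos _)]
  exact le_of_sq_le_sq hsq hC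

theorem summable_exp_neg_mul_norm_of_discrete {E : Type*} [NormedAddCommGroup E] [NormedSpace ℝ E]
    [FiniteDimensional ℝ E] (L : Submodule ℤ E) [DiscreteTopology L] {c : ℝ} (hc : 0 < c) :
    Summable fun z : L => Real.exp (-(c * ‖(z : E)‖)) := by
  set n := Module.finrank ℤ L + 1
  refine .of_norm_bounded_eventually
    ((ZLattice.summable_norm_pow_inv L n (Nat.lt_succ_self _)).mul_left (n.factorial / c ^ n)) ?_
  -- The comparison fails at `z = 0`, where `‖z‖⁻¹ ^ n` is the junk value `0`.
  filter_upwards [Filter.eventually_cofinite_ne 0] with z hz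
  have : 0 < ‖z‖ := norm_pos_iff.mpr hz
  have hpow : (c * ‖z‖) ^ n / n.factorial ≤ Real.exp (c * ‖z‖) :=
    Real.pow_div_factorial_le_exp _ (by positivity) n
  calc ‖Real.exp (-(c * ‖(z : E)‖))‖ = (Real.exp (c * ‖z‖))⁻¹ := by
        rw [Real.norm_eq_abs, Real.abs_exp, Real.exp_neg, Submodule.coe_norm]
    _ ≤ ((c * ‖z‖) ^ n / n.factorial)⁻¹ := by gcongr
    _ = n.factorial / c ^ n * ‖z‖⁻¹ ^ n := by
        rw [inv_div, mul_pow, inv_pow, div_mul_eq_div_div, div_eq_mul_inv _ (‖z‖ ^ n)]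

theorem zv_injective (d : ℕ) : Function.Injective (zv : (Fin d → ℤ) → Ed d) := by
  intro η η' h
  ext i
  exact Int.cast_injective (congrArg (fun x : Ed d => x i) h)

theorem zv_mem_span_basisFun {d : ℕ} (η : Fin d → ℤ) :
    zv η ∈ Submodule.span ℤ (Set.range (EuclideanSpace.basisFun (Fin d) ℝ).toBasis) :=
  (Module.Basis.mem_span_iff_repr_mem ℤ _ _).mpr fun i => ⟨η i, by simp [zv]⟩

theorem summable_exp_neg_mul_norm_zv (d : ℕ) {c : ℝ} (hc : 0 < c) :
    Summable fun η : Fin d → ℤ => Real.exp (-(c * ‖zv η‖)) := by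
  let L := Submodule.span ℤ (Set.range (EuclideanSpace.basisFun (Fin d) ℝ).toBasis)
  let toLattice (η : Fin d → ℤ) : L := ⟨zv η, zv_mem_span_basisFun η⟩
  have hinj : Function.Injective toLattice := fun _ _ h =>
    zv_injective d (congrArg Subtype.val h)
  simpa only [Function.comp_def] using
    (summable_exp_neg_mul_norm_of_discrete L hc).comp_injective hinj

end ExponentialWeights

theorem stmt2_general {G 𝕜 E : Type*} [AddGroup G] [RCLike 𝕜] [NormedAddCommGroup E]
    [InnerProductSpace 𝕜 E] [CompleteSpace E] {w : G → ℝ}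
    (hw : Summable fun η => Real.exp (-w η)) {C : ℝ} (hC : 0 ≤ C) (a : G → G → 𝕜)
    (ha : ∀ m, Summable (fun η => Real.exp (2 * w η) * ‖a η m‖ ^ 2) ∧
      ∑' η, Real.exp (2 * w η) * ‖a η m‖ ^ 2 ≤ C ^ 2) :
    ∃ T : lp (fun _ : G => E) 2 →L[𝕜] lp (fun _ : G => E) 2,
      ‖T‖ ≤ C * ∑' η, Real.exp (-w η) ∧
      (∀ (u : lp (fun _ : G => E) 2) (m : G), T u m = ∑' η, a η m • u (m + η)) ∧
      ((∀ η m, a η m = starRingEnd 𝕜 (a (-η) (m + η))) →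
        ∀ u v : lp (fun _ : G => E) 2, inner 𝕜 u (T v) = inner 𝕜 (T u) v) := by
  have hB : Summable fun η => C * Real.exp (-w η) := hw.mul_left C
  have hbound : ∀ η m, ‖a η m‖ ≤ C * Real.exp (-w η) := fun η m =>
    norm_le_mul_exp_neg_of_tsum_exp_mul_sq_le hC (ha m).1 (ha m).2 η
  refine ⟨translationOperator E 2 a hbound, ?_, fun u m => ?_, fun hsymm u v => ?_⟩
  · exact (norm_translationOperator_le hB hbound).trans_eq tsum_mul_left
  · exact (hasSum_translationOperator_apply hB hbound u m).tsum_eq.symm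
  · exact (isSymmetric_translationOperator hB hbound hsymm u v).symm

/-- Lemma 1.2 (d), boundedness and symmetry: under the exponential ℓ²-decay of the
coefficients, `(Tu)(x) = Σ_η a_η(x) u(x+εη)` defines a bounded operator on `ℓ²((εℤ)^d)`
with norm bounded by a constant depending only on `C, c, d` (uniform in `ε` and `a`);
if moreover `a_η(x) = a_{-η}(x+εη)` then `T` is symmetric. -/
theorem stmt2 (d : ℕ) (c C : ℝ) (hc : 0 < c) (hC : 0 < C) :
    ∃ C' : ℝ, 0 < C' ∧
      ∀ ε ∈ Set.Ioc (0:ℝ) 1, ∀ a : (Fin d → ℤ) → (Fin d → ℝ) → ℝ,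
        (∀ m : Fin d → ℤ,
          Summable (fun η : Fin d → ℤ =>
            Real.exp (2 * c * ‖zv η‖) * (a η (pt d ε m)) ^ 2) ∧
          ∑' η : Fin d → ℤ, Real.exp (2 * c * ‖zv η‖) * (a η (pt d ε m)) ^ 2 ≤ C ^ 2) →
        ∃ T : lp (fun _ : (Fin d → ℤ) => ℂ) 2 →L[ℂ] lp (fun _ : (Fin d → ℤ) => ℂ) 2,
          ‖T‖ ≤ C' ∧
          (∀ (u : lp (fun _ : (Fin d → ℤ) => ℂ) 2) (m : Fin d → ℤ),
            (T u) m = ∑' η : Fin d → ℤ, ((a η (pt d ε m) : ℝ) : ℂ) * u (m + η)) ∧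
          ((∀ η m : Fin d → ℤ, a η (pt d ε m) = a (-η) (pt d ε (m + η))) →
            ∀ u v : lp (fun _ : (Fin d → ℤ) => ℂ) 2,
              (inner ℂ u (T v) : ℂ) = inner ℂ (T u) v) := by
  have hw := summable_exp_neg_mul_norm_zv d hc
  refine ⟨_, mul_pos hC (hw.tsum_pos (fun _ => Real.exp_nonneg _) 0 (Real.exp_pos _)),
    fun ε _ a ha => ?_⟩
  simpa using stmt2_general (E := ℂ) hw hC.le (fun η m => (a η (pt d ε m) : ℂ))
    (by simpa [mul_assoc] using ha)
end
end

section
/- Let h ∈ C^∞(ℝ^d × ℝ^d, ℝ) be hyperconvex and even in each fibre with h(·,0) bounded from above, fix E ∈ ℝ, set M̃ := {x : h(x,0) < E}, let ξ_h(x,·) := (∇_ξ h(x,·))^{-1}, and let λ(x,v) be the unique positive number with h(x, ξ_h(x, λ(x,v)v)) = E (x ∈ M̃, v ≠ 0). Define ℓ(x,v) := ξ_h(x, λ(x,v) v) · v for v ≠ 0 and ℓ(x,0) := 0. Then ℓ(x, cv) = |c| ℓ(x,v) for every c ∈ ℝ, x ∈ M̃, v ∈ ℝ^d (absolute homogeneity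 of order one), and ℓ(x,v) > 0 for every v ≠ 0. -/
open scoped RealInnerProductSpace Classical
noncomputable section

/-!
By strict convexity, if `ξ` inverts the gradient of `f`, then `f ∘ ξ` is strictly increasing along
every open ray from the origin, so the positive number `λ(v)` that carries `v` to the energy level
`E` is unique. Hence `λ(c v) = c⁻¹ λ(v)` for `c > 0`, and `ξ(λ(c v) c v) = ξ(λ(v) v)`. Evenness of
`f` makes `ξ` odd and `λ` even, which gives the homogeneity for negative `c`. Positivity follows
from the tangent inequality of `f` at `ξ(v)`, evaluated at the opposite point `-ξ(v)`.
-/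

section AffineLine

theorem strictConvexOn_comp_affineMap {𝕜 V W β : Type*} [Field 𝕜] [PartialOrder 𝕜]
    [AddCommGroup V] [Module 𝕜 V] [AddCommGroup W] [Module 𝕜 W]
    [AddCommMonoid β] [PartialOrder β] [SMul 𝕜 β] {f : W → β} {s : Set W}
    (hf : StrictConvexOn 𝕜 s f) {g : V →ᵃ[𝕜] W} (hg : Function.Injective g) :
    StrictConvexOn 𝕜 (g ⁻¹' s) (f ∘ g) := by
  refine ⟨hf.1.affine_preimage g, fun x hx y hy hxy a b ha hb hab => ?_⟩
  simpa only [Function.comp_apply, Convex.combo_affine_apply hab]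
    using hf.2 hx hy (hg.ne hxy) ha hb hab

theorem strictConvexOn_of_comp_lineMap {𝕜 V β : Type*} [Field 𝕜] [PartialOrder 𝕜]
    [ZeroLEOneClass 𝕜] [AddCommGroup V] [Module 𝕜 V] [AddCommMonoid β] [PartialOrder β]
    [SMul 𝕜 β] {f : V → β} {s : Set V} (hs : Convex 𝕜 s)
    (hf : ∀ a ∈ s, ∀ b ∈ s, a ≠ b →
      StrictConvexOn 𝕜 (Set.Icc 0 1) fun t : 𝕜 => f (AffineMap.lineMap a b t)) :
    StrictConvexOn 𝕜 s f := by
  refine ⟨hs, fun a ha b hb hab p q hp hq hpq => ?_⟩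
  have hline := (hf a ha b hb hab).2 (Set.left_mem_Icc.2 zero_le_one)
    (Set.right_mem_Icc.2 zero_le_one) zero_ne_one hp hq hpq
  have hpoint : AffineMap.lineMap a b (p • (0 : 𝕜) + q • 1) = p • a + q • b := by
    simp only [Convex.combo_affine_apply hpq, AffineMap.lineMap_apply_zero,
      AffineMap.lineMap_apply_one]
  simpa only [hpoint, AffineMap.lineMap_apply_zero, AffineMap.lineMap_apply_one] using hline

end AffineLine

section NormedSpace

variable {V : Type*} [NormedAddCommGroup V] [NormedSpace ℝ V] {f : V → ℝ}

/-- Uniform positive definiteness of the Hessian, the hyperconvexity required of a Hamilton function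
in each fibre. The Hessian is `iteratedFDeriv ℝ 2 f x`, so `f` is meant to be of class `C²`. -/
def IsHyperconvex (f : V → ℝ) : Prop :=
  ∃ α : ℝ, 0 < α ∧ ∀ x v : V, α * ‖v‖ ^ 2 ≤ iteratedFDeriv ℝ 2 f x ![v, v]

theorem iterate_deriv_two_comp_lineMap {F : Type*} [NormedAddCommGroup F] [NormedSpace ℝ F]
    {f : V → F} (hf : ContDiff ℝ 2 f) (a b : V) (t : ℝ) :
    deriv^[2] (fun s : ℝ => f (AffineMap.lineMap a b s)) t =
      iteratedFDeriv ℝ 2 f (AffineMap.lineMap a b t) ![b - a, b - a] := by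
  have hline (s : ℝ) : HasDerivAt (AffineMap.lineMap a b) (b - a) s :=
    AffineMap.hasDerivAt_lineMap
  have hderiv : deriv (fun s : ℝ => f (AffineMap.lineMap a b s)) =
      fun s => fderiv ℝ f (AffineMap.lineMap a b s) (b - a) := funext fun s =>
    ((hf.differentiable two_ne_zero _).hasFDerivAt.comp_hasDerivAt s (hline s)).deriv
  have hderiv₂ : HasDerivAt (fun s => fderiv ℝ f (AffineMap.lineMap a b s))
      (fderiv ℝ (fderiv ℝ f) (AffineMap.lineMap a b t) (b - a)) t :=
    ((hf.fderiv_right (m := 1) one_add_one_eq_two.le).differentiable one_ne_zero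
      _).hasFDerivAt.comp_hasDerivAt t (hline t)
  rw [Function.iterate_succ_apply', Function.iterate_one, hderiv, iteratedFDeriv_two_apply]
  simpa using (hderiv₂.clm_apply (hasDerivAt_const t (b - a))).deriv

theorem strictConvexOn_univ_of_iteratedFDeriv_two_pos (hf : ContDiff ℝ 2 f)
    (hpos : ∀ x v : V, v ≠ 0 → 0 < iteratedFDeriv ℝ 2 f x ![v, v]) :
    StrictConvexOn ℝ Set.univ f := by
  refine strictConvexOn_of_comp_lineMap convex_univ fun a _ b _ hab => ?_
  refine strictConvexOn_of_deriv2_pos' (convex_Icc 0 1)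
    (hf.continuous.comp AffineMap.lineMap_continuous).continuousOn fun t _ => ?_
  rw [iterate_deriv_two_comp_lineMap hf]
  exact hpos _ _ (sub_ne_zero.2 hab.symm)

theorem IsHyperconvex.strictConvexOn_univ (hconv : IsHyperconvex f) (hf : ContDiff ℝ 2 f) :
    StrictConvexOn ℝ Set.univ f := by
  obtain ⟨α, hα, hbound⟩ := hconv
  refine strictConvexOn_univ_of_iteratedFDeriv_two_pos hf fun x v hv => ?_
  exact (mul_pos hα (pow_pos (norm_pos_iff.2 hv) 2)).trans_le (hbound x v)

theorem fderiv_sub_lt_of_strictConvexOn {s : Set V} (hf : StrictConvexOn ℝ s f) {a b : V}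
    {f' : V →L[ℝ] ℝ} (ha : a ∈ s) (hb : b ∈ s) (hab : a ≠ b) (hf' : HasFDerivAt f f' a) :
    f' (b - a) < f b - f a := by
  have hline := strictConvexOn_comp_affineMap hf (AffineMap.lineMap_injective ℝ hab)
  have hderiv : HasDerivAt (f ∘ AffineMap.lineMap a b) (f' (b - a)) (0 : ℝ) :=
    HasFDerivAt.comp_hasDerivAt 0 (by simpa using hf') AffineMap.hasDerivAt_lineMap
  simpa [slope_def_field] using
    hline.lt_slope_of_hasDerivAt (by simpa using ha) (by simpa using hb) zero_lt_one hderiv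

theorem hasFDerivAt_neg_of_even {𝕜 E F : Type*} [NontriviallyNormedField 𝕜]
    [NormedAddCommGroup E] [NormedSpace 𝕜 E] [NormedAddCommGroup F] [NormedSpace 𝕜 F]
    {f : E → F} (heven : Function.Even f) {f' : E →L[𝕜] F} {a : E} (hf' : HasFDerivAt f f' a) :
    HasFDerivAt f (-f') (-a) := by
  have hcomp : HasFDerivAt (fun x => f (-x)) (f'.comp (-ContinuousLinearMap.id 𝕜 E)) (-a) :=
    HasFDerivAt.comp (-a) (by simpa using hf') (hasFDerivAt_id (-a)).neg
  simpa [heven _] using hcomp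

end NormedSpace

section InnerProductSpace

variable {H : Type*} [NormedAddCommGroup H] [InnerProductSpace ℝ H] [CompleteSpace H]
  {f : H → ℝ} {s : Set H} {u v a b : H}

theorem inner_sub_lt_of_strictConvexOn (hf : StrictConvexOn ℝ s f) (ha : a ∈ s) (hb : b ∈ s)
    (hab : a ≠ b) (hv : HasGradientAt f v a) : ⟪v, b - a⟫ < f b - f a := by
  simpa using fderiv_sub_lt_of_strictConvexOn hf ha hb hab hv.hasFDerivAt

theorem inner_sub_sub_pos_of_strictConvexOn (hf : StrictConvexOn ℝ s f) (ha : a ∈ s) (hb : b ∈ s)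
    (hab : a ≠ b) (hu : HasGradientAt f u a) (hv : HasGradientAt f v b) :
    0 < ⟪v - u, b - a⟫ := by
  have hua := inner_sub_lt_of_strictConvexOn hf ha hb hab hu
  have hvb := inner_sub_lt_of_strictConvexOn hf hb ha hab.symm hv
  rw [← neg_sub b a, inner_neg_right] at hvb
  rw [inner_sub_left]
  linarith

theorem eq_of_hasGradientAt_of_strictConvexOn (hf : StrictConvexOn ℝ s f) (ha : a ∈ s)
    (hb : b ∈ s) (hva : HasGradientAt f v a) (hvb : HasGradientAt f v b) : a = b := by
  by_contra hab
  simpa using inner_sub_sub_pos_of_strictConvexOn hf ha hb hab hva hvb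

theorem hasGradientAt_neg_of_even (heven : Function.Even f) (hv : HasGradientAt f v a) :
    HasGradientAt f (-v) (-a) := by
  rw [hasGradientAt_iff_hasFDerivAt, map_neg]
  exact hasFDerivAt_neg_of_even heven hv.hasFDerivAt

theorem lt_of_hasGradientAt_smul (hf : StrictConvexOn ℝ s f) (ha : a ∈ s) (hb : b ∈ s)
    (hv : v ≠ 0) {p q : ℝ} (hp : 0 < p) (hpq : p < q)
    (hva : HasGradientAt f (p • v) a) (hvb : HasGradientAt f (q • v) b) : f a < f b := by
  have hab : a ≠ b := by
    rintro rfl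
    exact hpq.ne (smul_left_injective ℝ hv (hva.unique hvb))
  have hmono := inner_sub_sub_pos_of_strictConvexOn hf ha hb hab hva hvb
  rw [← sub_smul, real_inner_smul_left] at hmono
  have hinner : 0 < ⟪v, b - a⟫ := pos_of_mul_pos_right hmono (sub_pos.2 hpq).le
  refine sub_pos.1 (lt_trans ?_ (inner_sub_lt_of_strictConvexOn hf ha hb hab hva))
  rw [real_inner_smul_left]
  exact mul_pos hp hinner

theorem inner_pos_of_hasGradientAt_of_even (hf : StrictConvexOn ℝ s f) (heven : Function.Even f)
    (ha : a ∈ s) (hna : -a ∈ s) (hv : v ≠ 0) (hva : HasGradientAt f v a) : 0 < ⟪a, v⟫ := by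
  have : IsAddTorsionFree H := .of_isTorsionFree ℝ H
  have hneg : a ≠ -a := by
    intro haa
    have hva' := hasGradientAt_neg_of_even heven hva
    rw [← haa] at hva'
    exact hv (self_eq_neg.1 (hva.unique hva'))
  have htangent := inner_sub_lt_of_strictConvexOn hf ha hna hneg hva
  rw [heven, sub_self, inner_sub_right, inner_neg_right] at htangent
  rw [real_inner_comm]
  linarith

end InnerProductSpace

section EnergyFinsler

variable {H : Type*} [NormedAddCommGroup H] [InnerProductSpace ℝ H]
  {f : H → ℝ} {ξ : H → H} {E : ℝ} {lam : H → ℝ} {v : H} {c : ℝ}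

/-- `lam` is the scaling function of the projection along rays onto the energy shell
`{f ∘ ξ = E}`, where `f` is a Hamilton function in one fibre and `ξ` is the inverse of its gradient.
The value `lam 0` is unconstrained. -/
def IsEnergyScaling (f : H → ℝ) (ξ : H → H) (E : ℝ) (lam : H → ℝ) : Prop :=
  ∀ v, v ≠ 0 → 0 < lam v ∧ f (ξ (lam v • v)) = E

/-- The Finsler function `ℓ` on one fibre, from the inverse gradient `ξ` and the scaling function
`lam` of the energy shell. No case distinction at `v = 0` is made: the inner product with `0`
vanishes whatever `lam 0` is. -/
def energyFinsler (ξ : H → H) (lam : H → ℝ) (v : H) : ℝ :=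
  ⟪ξ (lam v • v), v⟫

variable [CompleteSpace H]

theorem odd_of_hasGradientAt (hf : StrictConvexOn ℝ Set.univ f) (heven : Function.Even f)
    (hξ : ∀ v, HasGradientAt f v (ξ v)) : Function.Odd ξ := fun v =>
  eq_of_hasGradientAt_of_strictConvexOn hf (Set.mem_univ _) (Set.mem_univ _) (hξ (-v))
    (hasGradientAt_neg_of_even heven (hξ v))

theorem strictMonoOn_comp_smul_of_hasGradientAt (hf : StrictConvexOn ℝ Set.univ f)
    (hξ : ∀ v, HasGradientAt f v (ξ v)) (hv : v ≠ 0) :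
    StrictMonoOn (fun t : ℝ => f (ξ (t • v))) (Set.Ioi 0) := fun _ hp _ _ hpq =>
  lt_of_hasGradientAt_smul hf (Set.mem_univ _) (Set.mem_univ _) hv hp hpq (hξ _) (hξ _)

namespace IsEnergyScaling

theorem eq_of_pos (hlam : IsEnergyScaling f ξ E lam) (hf : StrictConvexOn ℝ Set.univ f)
    (hξ : ∀ v, HasGradientAt f v (ξ v)) (hv : v ≠ 0) {t : ℝ} (ht : 0 < t)
    (hE : f (ξ (t • v)) = E) : t = lam v :=
  (strictMonoOn_comp_smul_of_hasGradientAt hf hξ hv).injOn ht (hlam v hv).1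
    (hE.trans (hlam v hv).2.symm)

theorem apply_smul_mul_of_pos (hlam : IsEnergyScaling f ξ E lam) (hf : StrictConvexOn ℝ Set.univ f)
    (hξ : ∀ v, HasGradientAt f v (ξ v)) (hv : v ≠ 0) (hc : 0 < c) :
    lam (c • v) * c = lam v := by
  obtain ⟨hpos, hE⟩ := hlam (c • v) (smul_ne_zero hc.ne' hv)
  rw [smul_smul] at hE
  exact hlam.eq_of_pos hf hξ hv (mul_pos hpos hc) hE

theorem apply_neg (hlam : IsEnergyScaling f ξ E lam) (hf : StrictConvexOn ℝ Set.univ f)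
    (heven : Function.Even f) (hξ : ∀ v, HasGradientAt f v (ξ v)) (hv : v ≠ 0) :
    lam (-v) = lam v := by
  obtain ⟨hpos, hE⟩ := hlam (-v) (neg_ne_zero.2 hv)
  rw [smul_neg, odd_of_hasGradientAt hf heven hξ, heven] at hE
  exact hlam.eq_of_pos hf hξ hv hpos hE

theorem energyFinsler_smul_of_pos (hlam : IsEnergyScaling f ξ E lam)
    (hf : StrictConvexOn ℝ Set.univ f) (hξ : ∀ v, HasGradientAt f v (ξ v)) (v : H) (hc : 0 < c) :
    energyFinsler ξ lam (c • v) = c * energyFinsler ξ lam v := by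
  rcases eq_or_ne v 0 with rfl | hv
  · simp [energyFinsler]
  · simp only [energyFinsler, smul_smul, hlam.apply_smul_mul_of_pos hf hξ hv hc,
      real_inner_smul_right]

theorem energyFinsler_neg (hlam : IsEnergyScaling f ξ E lam) (hf : StrictConvexOn ℝ Set.univ f)
    (heven : Function.Even f) (hξ : ∀ v, HasGradientAt f v (ξ v)) (v : H) :
    energyFinsler ξ lam (-v) = energyFinsler ξ lam v := by
  rcases eq_or_ne v 0 with rfl | hv
  · rw [neg_zero]
  · simp only [energyFinsler, hlam.apply_neg hf heven hξ hv, smul_neg,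
      odd_of_hasGradientAt hf heven hξ _, inner_neg_neg]

theorem energyFinsler_smul (hlam : IsEnergyScaling f ξ E lam) (hf : StrictConvexOn ℝ Set.univ f)
    (heven : Function.Even f) (hξ : ∀ v, HasGradientAt f v (ξ v)) (v : H) (c : ℝ) :
    energyFinsler ξ lam (c • v) = |c| * energyFinsler ξ lam v := by
  rcases lt_trichotomy c 0 with hc | rfl | hc
  · rw [abs_of_neg hc, ← hlam.energyFinsler_smul_of_pos hf hξ v (neg_pos.2 hc), neg_smul,
      hlam.energyFinsler_neg hf heven hξ]
  · simp [energyFinsler]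
  · rw [abs_of_pos hc, hlam.energyFinsler_smul_of_pos hf hξ v hc]

theorem energyFinsler_pos (hlam : IsEnergyScaling f ξ E lam) (hf : StrictConvexOn ℝ Set.univ f)
    (heven : Function.Even f) (hξ : ∀ v, HasGradientAt f v (ξ v)) (hv : v ≠ 0) :
    0 < energyFinsler ξ lam v := by
  have hpos := (hlam v hv).1
  have hinner := inner_pos_of_hasGradientAt_of_even hf heven (Set.mem_univ _) (Set.mem_univ _)
    (smul_ne_zero hpos.ne' hv) (hξ (lam v • v))
  rw [real_inner_smul_right] at hinner
  exact pos_of_mul_pos_right hinner hpos.le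

end IsEnergyScaling

theorem stmt7_general (hf : StrictConvexOn ℝ Set.univ f) (heven : Function.Even f)
    (hξ : ∀ v, HasGradientAt f v (ξ v)) (hlam : IsEnergyScaling f ξ E lam) :
    (∀ (v : H) (c : ℝ), energyFinsler ξ lam (c • v) = |c| * energyFinsler ξ lam v)
      ∧ ∀ v : H, v ≠ 0 → 0 < energyFinsler ξ lam v :=
  ⟨hlam.energyFinsler_smul hf heven hξ, fun _ => hlam.energyFinsler_pos hf heven hξ⟩

end EnergyFinsler

/-- Theorem 2.10 (ii), homogeneity and positivity: the function
`ℓ(x,v) = ξ_h(x, λ(x,v)v)·v` (with `ℓ(x,0) = 0`) associated to a hyperconvex, even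
Hamilton function `h` at energy `E` is absolutely homogeneous of order one in `v`
and is positive for `v ≠ 0`, for every `x` in `M̃ = {h(x,0) < E}`. -/
theorem stmt7 (d : ℕ) (h : Ed d → Ed d → ℝ)
    (hsmooth : ContDiff ℝ (⊤ : ℕ∞) (fun p : Ed d × Ed d => h p.1 p.2))
    (hconv : ∀ x : Ed d, ∃ α : ℝ, 0 < α ∧ ∀ ξ v : Ed d,
      α * ‖v‖ ^ 2 ≤ iteratedFDeriv ℝ 2 (h x) ξ ![v, v])
    (heven : ∀ x ξ : Ed d, h x ξ = h x (-ξ))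
    (hbdd : ∃ K : ℝ, ∀ x : Ed d, h x 0 ≤ K)
    (ξh : Ed d → Ed d → Ed d)
    (hξh1 : ∀ x v : Ed d, gradient (h x) (ξh x v) = v)
    (hξh2 : ∀ x ξ : Ed d, ξh x (gradient (h x) ξ) = ξ)
    (E : ℝ)
    (lam : Ed d → Ed d → ℝ)
    (hlam : ∀ x : Ed d, h x 0 < E → ∀ v : Ed d, v ≠ 0 →
      0 < lam x v ∧ h x (ξh x (lam x v • v)) = E)
    (ℓ : Ed d → Ed d → ℝ)
    (hℓ : ∀ x v : Ed d, ℓ x v = if v = 0 then 0 else ⟪ξh x (lam x v • v), v⟫) :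
    ∀ x : Ed d, h x 0 < E →
      (∀ (v : Ed d) (c : ℝ), ℓ x (c • v) = |c| * ℓ x v)
      ∧ (∀ v : Ed d, v ≠ 0 → 0 < ℓ x v) := by
  intro x hx
  have hC2 : ContDiff ℝ 2 (h x) :=
    (hsmooth.comp (contDiff_prodMk_right x)).of_le (WithTop.coe_le_coe.2 (le_top : (2 : ℕ∞) ≤ ⊤))
  have hξ : ∀ v, HasGradientAt (h x) v (ξh x v) := fun v => by
    simpa only [hξh1] using (hC2.differentiable two_ne_zero (ξh x v)).hasGradientAt
  have hℓx : ℓ x = energyFinsler (ξh x) (lam x) := by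
    ext v
    simp +contextual [hℓ, energyFinsler]
  rw [hℓx]
  have hconvx : IsHyperconvex (h x) := hconv x
  exact stmt7_general (hconvx.strictConvexOn_univ hC2) (fun ξ => (heven x ξ).symm) hξ (hlam x hx)
end
end
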